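/- Let ℓ and p be distinct primes, and write v_p for the p-adic valuation. (i) For every open subgroup V of finite index in H(ℤ_ℓ), the p-adic valuation of the index [H(ℤ_ℓ) : V] is at most v_p((ℓ−1)³(ℓ+1)²). (ii) For every g ∈ G(ℚ_ℓ), the subgroup W = {h ∈ H(ℤ_ℓ) : ι(h) ∈ g · G(ℤ_ℓ) · g⁻¹} is open of finite index in H(ℤ_ℓ), and v_p([H(ℤ_ℓ) : W]) ≤ v_p((ℓ−1)²(ℓ+1)²). -/

import Mathlib

open Pointwise

noncomputable section

/-- The ambient ring containing `G(ℚ_ℓ) = (GSp₄ ×_{GL₁} GL₂)(ℚ_ℓ)`: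
pairs of a 4×4 and a 2×2 matrix over `ℚ_ℓ`. -/
abbrev MG (p : ℕ) [Fact p.Prime] :=
  Matrix (Fin 4) (Fin 4) ℚ_[p] × Matrix (Fin 2) (Fin 2) ℚ_[p]

/-- The standard skew-symmetric matrix `J` defining `GSp₄`. -/
def Jmat (p : ℕ) [Fact p.Prime] : Matrix (Fin 4) (Fin 4) ℚ_[p] :=
  !![0, 0, 0, 1; 0, 0, 1, 0; 0, -1, 0, 0; -1, 0, 0, 0]

/-- `G(ℤ_ℓ)`: pairs `(g, h)` with `g ∈ GSp₄(ℤ_ℓ)`, `h ∈ GL₂(ℤ_ℓ)` and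
`μ(g) = det h`. -/
def GZ (p : ℕ) [Fact p.Prime] : Set (MG p) :=
  {x | (∀ i j, ‖x.1 i j‖ ≤ 1) ∧ (∀ i j, ‖x.2 i j‖ ≤ 1) ∧
    ‖x.1.det‖ = 1 ∧ ‖x.2.det‖ = 1 ∧
    x.1.transpose * Jmat p * x.1 = x.2.det • Jmat p}

/-- `G(ℚ_ℓ)`: pairs `(g, h)` with `g ∈ GSp₄(ℚ_ℓ)`, `h ∈ GL₂(ℚ_ℓ)` and `μ(g) = det h`. -/
def GQ (p : ℕ) [Fact p.Prime] : Set (MG p) :=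
  {x | ∃ μ : ℚ_[p], μ ≠ 0 ∧ x.1.transpose * Jmat p * x.1 = μ • Jmat p ∧ x.2.det = μ}

/-- The ambient ring containing `H(ℚ_ℓ) = (GL₂ ×_{GL₁} GL₂)(ℚ_ℓ)`. -/
abbrev MH (p : ℕ) [Fact p.Prime] :=
  Matrix (Fin 2) (Fin 2) ℚ_[p] × Matrix (Fin 2) (Fin 2) ℚ_[p]

/-- `H(ℤ_ℓ)`: pairs `(h₁, h₂)` of elements of `GL₂(ℤ_ℓ)` with `det h₁ = det h₂`. -/
def HZ (p : ℕ) [Fact p.Prime] : Set (MH p) :=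
  {x | (∀ i j, ‖x.1 i j‖ ≤ 1) ∧ (∀ i j, ‖x.2 i j‖ ≤ 1) ∧
    ‖x.1.det‖ = 1 ∧ x.1.det = x.2.det}

/-- The embedding `ι : H → G`. -/
def iota (p : ℕ) [Fact p.Prime] : MH p → MG p := fun x =>
  (!![x.1 0 0, 0, 0, x.1 0 1;
      0, x.2 0 0, x.2 0 1, 0;
      0, x.2 1 0, x.2 1 1, 0;
      x.1 1 0, 0, 0, x.1 1 1], x.2)

/-- A subset of `H(ℤ_ℓ)` is a subgroup if it contains `1`, is closed under
multiplication, and every element has a two-sided inverse inside it. -/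
def IsSubgroupSet (p : ℕ) [Fact p.Prime] (V : Set (MH p)) : Prop :=
  (1 : MH p) ∈ V ∧ (∀ x ∈ V, ∀ y ∈ V, x * y ∈ V) ∧
    (∀ x ∈ V, ∃ y ∈ V, x * y = 1 ∧ y * x = 1)

/-- The index of `V` in `H(ℤ_ℓ)`: the number of left cosets `g·V`, `g ∈ H(ℤ_ℓ)`. -/
def Hindex (p : ℕ) [Fact p.Prime] (V : Set (MH p)) : ℕ :=
  ((fun g => ({g} : Set (MH p)) * V) '' HZ p).ncard

/-- pairs in `GL₂(R)²` with equal determinant -/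
def DD (R : Type) [CommRing R] : Subgroup (GL (Fin 2) R × GL (Fin 2) R) :=
  MonoidHom.ker (((Matrix.GeneralLinearGroup.det.comp (MonoidHom.fst _ _)) /
    (Matrix.GeneralLinearGroup.det.comp (MonoidHom.snd _ _))) :
      GL (Fin 2) R × GL (Fin 2) R →* Rˣ)

lemma mem_DD {R : Type} [CommRing R] (x : GL (Fin 2) R × GL (Fin 2) R) :
    x ∈ DD R ↔ Matrix.GeneralLinearGroup.det x.1 = Matrix.GeneralLinearGroup.det x.2 := by
  simp [DD, MonoidHom.mem_ker, div_eq_one]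

/-- base change -/
def DM {R S : Type} [CommRing R] [CommRing S] (f : R →+* S) :
    DD R →* GL (Fin 2) S × GL (Fin 2) S :=
  ((Matrix.GeneralLinearGroup.map f).prodMap (Matrix.GeneralLinearGroup.map f)).comp
    (DD R).subtype

lemma DM_range {R S : Type} [CommRing R] [CommRing S] (f : R →+* S) : (DM f).range ≤ DD S := by
  rintro _ ⟨x, rfl⟩
  have := (mem_DD _).1 x.2
  rw [mem_DD]
  simp [DM, Matrix.GeneralLinearGroup.map_det, this]

lemma mem_DM_ker {R S : Type} [CommRing R] [CommRing S] (f : R →+* S) (x : DD R) :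
    x ∈ (DM f).ker ↔ (∀ i j, f (x.1.1.1 i j) = (1 : Matrix (Fin 2) (Fin 2) S) i j) ∧
      (∀ i j, f (x.1.2.1 i j) = (1 : Matrix (Fin 2) (Fin 2) S) i j) := by
  rw [MonoidHom.mem_ker, Prod.ext_iff, Units.ext_iff, Units.ext_iff, ← Matrix.ext_iff,
    ← Matrix.ext_iff]
  rfl

lemma det_GL_surj (F : Type) [Field F] (u : Fˣ) :
    ∃ x : GL (Fin 2) F, Matrix.GeneralLinearGroup.det x = u := by
  refine ⟨Matrix.GeneralLinearGroup.mkOfDetNeZero !![(u : F), 0; 0, 1] (by simp), ?_⟩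
  ext
  simp [Matrix.GeneralLinearGroup.mkOfDetNeZero]

lemma card_DD (l : ℕ) [Fact l.Prime] :
    Nat.card (DD (ZMod l)) = l ^ 2 * ((l - 1) ^ 3 * (l + 1) ^ 2) := by
  have h1 : Nat.card (DD (ZMod l)) * (l - 1) = Nat.card (GL (Fin 2) (ZMod l)) ^ 2 := by
    have h := (DD (ZMod l)).card_mul_index
    rw [Nat.card_prod] at h
    rw [sq, ← h]
    congr 1
    unfold DD
    rw [Subgroup.index_ker, MonoidHom.range_eq_top.2, Subgroup.card_top, Nat.card_eq_fintype_card,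
      ZMod.card_units]
    intro u
    obtain ⟨x, hx⟩ := det_GL_surj (ZMod l) u
    exact ⟨(x, 1), by simp [hx]⟩
  have h2 : Nat.card (GL (Fin 2) (ZMod l)) = l * ((l - 1) ^ 2 * (l + 1)) := by
    rw [Matrix.card_GL_field]
    simp only [ZMod.card, Fin.prod_univ_two, Fin.val_zero, Fin.val_one, pow_zero, pow_one]
    obtain ⟨k, hk⟩ : ∃ k, l = k + 1 := ⟨l - 1, by have := (Fact.out : l.Prime).pos; omega⟩
    subst hk
    have e1 : (k + 1) ^ 2 - 1 = k * (k + 2) := by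
      rw [Nat.sub_eq_iff_eq_add (Nat.succ_le_of_lt (by positivity))]; ring
    have e2 : (k + 1) ^ 2 - (k + 1) = k * (k + 1) := by
      rw [Nat.sub_eq_iff_eq_add (by nlinarith)]; ring
    rw [e1, e2]; simp; ring
  have h3 : 0 < l - 1 := by have := (Fact.out : l.Prime).two_le; omega
  refine Nat.eq_of_mul_eq_mul_right h3 ?_
  rw [h1, h2]; ring

lemma pow_congr_one (l : ℕ) {M : Type} [Ring M] (z : M) (k : ℕ) :
    ∃ w : M, (1 + (l : M) * z) ^ l ^ k = 1 + (l : M) ^ (k + 1) * w := by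
  have h : ((l : Polynomial ℤ)) ∣ (1 + (l : Polynomial ℤ) * Polynomial.X) - 1 :=
    ⟨Polynomial.X, by ring⟩
  obtain ⟨w, hw⟩ := dvd_sub_pow_of_dvd_sub h k
  refine ⟨Polynomial.aeval z w, ?_⟩
  have := congrArg (Polynomial.aeval z) hw
  simp only [map_sub, map_pow, map_add, map_mul, map_one, map_natCast, Polynomial.aeval_X,
    one_pow] at this
  rw [← this]; abel

lemma GL_pow (l : ℕ) [Fact l.Prime] (x : GL (Fin 2) ℤ_[l])
    (hx : ∀ i j, PadicInt.toZMod (x.1 i j) = (1 : Matrix (Fin 2) (Fin 2) (ZMod l)) i j) (k : ℕ) :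
    ∀ i j, PadicInt.toZModPow k ((x ^ l ^ k).1 i j) =
      (1 : Matrix (Fin 2) (Fin 2) (ZMod (l ^ k))) i j := by
  have h1 : ∀ i j, ∃ z : ℤ_[l], x.1 i j = (1 : Matrix (Fin 2) (Fin 2) ℤ_[l]) i j + l * z := by
    intro i j
    have : x.1 i j - (1 : Matrix (Fin 2) (Fin 2) ℤ_[l]) i j ∈
        RingHom.ker (PadicInt.toZMod : ℤ_[l] →+* ZMod l) := by
      rw [RingHom.mem_ker, map_sub, hx, sub_eq_zero, Matrix.one_apply, Matrix.one_apply]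
      split_ifs <;> simp
    rw [PadicInt.ker_toZMod, PadicInt.maximalIdeal_eq_span_p, Ideal.mem_span_singleton] at this
    obtain ⟨z, hz⟩ := this
    exact ⟨z, by rw [← hz]; ring⟩
  choose z hz using h1
  have h2 : x.1 = 1 + (l : Matrix (Fin 2) (Fin 2) ℤ_[l]) * Matrix.of z := by
    ext i j
    rw [hz, Matrix.add_apply, ← nsmul_eq_mul l (Matrix.of z), Matrix.smul_apply, nsmul_eq_mul,
      Matrix.of_apply]
  obtain ⟨w, hw⟩ := pow_congr_one l (Matrix.of z) k
  intro i j
  rw [Units.val_pow_eq_pow_val, h2, hw, ← Nat.cast_pow, ← nsmul_eq_mul, Matrix.add_apply,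
    Matrix.smul_apply, nsmul_eq_mul, map_add, map_mul, map_natCast]
  have : ((l ^ (k + 1) : ℕ) : ZMod (l ^ k)) = 0 := by
    rw [ZMod.natCast_eq_zero_iff]; exact pow_dvd_pow _ (Nat.le_succ _)
  rw [this, zero_mul, add_zero, Matrix.one_apply, Matrix.one_apply]
  split_ifs <;> simp

/-- the main group-theoretic count -/
lemma core (l : ℕ) [Fact l.Prime] (V : Subgroup (DD ℤ_[l])) (n : ℕ)
    (hV : (DM (PadicInt.toZModPow n : ℤ_[l] →+* ZMod (l ^ n))).ker ≤ V) :
    V.index ≠ 0 ∧ ∃ N, V.index * Nat.card (V.map (DM (PadicInt.toZMod : ℤ_[l] →+* ZMod l))) ∣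
      l ^ N * ((l - 1) ^ 3 * (l + 1) ^ 2) := by
  set φ := DM (PadicInt.toZMod : ℤ_[l] →+* ZMod l) with hφ
  set ψ := DM (PadicInt.toZModPow n : ℤ_[l] →+* ZMod (l ^ n)) with hψ
  have : NeZero (l ^ n) := ⟨pow_ne_zero _ (Fact.out : l.Prime).ne_zero⟩
  constructor
  · have h := Subgroup.index_dvd_of_le hV
    rw [Subgroup.index_ker] at h
    exact fun h0 => (Nat.card_pos (α := ψ.range)).ne' (by simpa [h0] using h)
  · have hP : IsPGroup l (φ.ker.map ψ) := by
      rintro ⟨_, x, hx, rfl⟩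
      refine ⟨n, ?_⟩
      ext1
      change (ψ x) ^ l ^ n = 1
      rw [← map_pow, ← MonoidHom.mem_ker, mem_DM_ker]
      have hx' := (mem_DM_ker _ _).1 hx
      exact ⟨GL_pow l x.1.1 hx'.1 n, GL_pow l x.1.2 hx'.2 n⟩
    obtain ⟨m, hm⟩ := IsPGroup.iff_card.1 hP
    refine ⟨m + 2, ?_⟩
    have e1 : V.index * Nat.card (V.map φ) = Nat.card φ.range * V.relIndex φ.ker := by
      rw [← Subgroup.relIndex_ker, ← Subgroup.index_ker, ← Subgroup.inf_relIndex_left,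
        ← Subgroup.inf_relIndex_right V φ.ker, mul_comm, mul_comm φ.ker.index,
        Subgroup.relIndex_mul_index inf_le_left, Subgroup.relIndex_mul_index inf_le_right]
    have e2 : V.relIndex φ.ker ∣ l ^ m := by
      rw [← hm, ← Subgroup.relIndex_ker]
      exact Subgroup.relIndex_dvd_of_le_left _ hV
    have e3 : Nat.card φ.range ∣ l ^ 2 * ((l - 1) ^ 3 * (l + 1) ^ 2) := by
      rw [← card_DD]
      exact Subgroup.card_dvd_of_le (DM_range _)
    rw [e1]
    refine (mul_dvd_mul e3 e2).trans (dvd_of_eq (by ring))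

/-- scalar pairs -/
def scal (R : Type) [CommRing R] : Rˣ →* GL (Fin 2) R × GL (Fin 2) R :=
  (Matrix.GeneralLinearGroup.scalar (Fin 2)).prod (Matrix.GeneralLinearGroup.scalar (Fin 2))

lemma scal_mem (R : Type) [CommRing R] (u : Rˣ) : scal R u ∈ DD R := by
  rw [mem_DD]; rfl

lemma scal_DM {R S : Type} [CommRing R] [CommRing S] (f : R →+* S) (u : Rˣ) :
    DM f ⟨scal R u, scal_mem R u⟩ = scal S (Units.map f.toMonoidHom u) := by
  have : Matrix.GeneralLinearGroup.map f (Matrix.GeneralLinearGroup.scalar (Fin 2) u) =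
      Matrix.GeneralLinearGroup.scalar (Fin 2) (Units.map f.toMonoidHom u) := by
    ext i j
    simp [Matrix.GeneralLinearGroup.map, Matrix.GeneralLinearGroup.scalar, Matrix.diagonal_apply,
      apply_ite f]
  exact Prod.ext this this

lemma card_scal (l : ℕ) [Fact l.Prime] (V : Subgroup (DD ℤ_[l]))
    (hV : ∀ u, ⟨scal _ u, scal_mem _ u⟩ ∈ V) :
    l - 1 ∣ Nat.card (V.map (DM (PadicInt.toZMod : ℤ_[l] →+* ZMod l))) := by
  have h1 : Nat.card (scal (ZMod l)).range = l - 1 := by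
    rw [← ZMod.card_units l, ← Nat.card_eq_fintype_card]
    refine (Nat.card_congr (MonoidHom.ofInjective (f := scal (ZMod l)) ?_).toEquiv).symm
    intro u v h
    have := congrArg (fun x => x.1.1 0 0) h
    ext
    simpa [scal, Matrix.GeneralLinearGroup.scalar] using this
  rw [← h1]
  apply Subgroup.card_dvd_of_le
  rintro _ ⟨u, rfl⟩
  have hs : Function.Surjective (PadicInt.toZMod : ℤ_[l] →+* ZMod l) :=
    ZMod.ringHom_surjective _
  obtain ⟨a, ha⟩ := hs u
  have hu : IsUnit a := by
    by_contra hc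
    have : a ∈ RingHom.ker (PadicInt.toZMod : ℤ_[l] →+* ZMod l) := by
      rw [PadicInt.ker_toZMod]; exact hc
    rw [RingHom.mem_ker, ha] at this
    exact u.ne_zero this
  obtain ⟨v, rfl⟩ := hu
  refine ⟨_, hV v, ?_⟩
  rw [scal_DM]
  congr 1
  ext; exact ha

lemma val_le (l p : ℕ) [Fact l.Prime] [Fact p.Prime] (hlp : l ≠ p) (a N M : ℕ) (hM : M ≠ 0)
    (h : a ∣ l ^ N * M) : padicValNat p a ≤ padicValNat p M := by
  rw [← padicValNat_dvd_iff_le hM]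
  refine Nat.Coprime.dvd_of_dvd_mul_left ?_ (pow_padicValNat_dvd.trans h)
  exact Nat.Coprime.pow _ _ ((Nat.coprime_primes Fact.out Fact.out).2 hlp.symm)

/-- the inclusion of integral matrices -/
def mz (l : ℕ) [Fact l.Prime] (n : ℕ) :
    Matrix (Fin n) (Fin n) ℤ_[l] →+* Matrix (Fin n) (Fin n) ℚ_[l] :=
  (PadicInt.Coe.ringHom : ℤ_[l] →+* ℚ_[l]).mapMatrix

lemma mz_apply (l : ℕ) [Fact l.Prime] (n : ℕ) (A : Matrix (Fin n) (Fin n) ℤ_[l]) (i j) :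
    mz l n A i j = (A i j : ℚ_[l]) := rfl

lemma mz_inj (l : ℕ) [Fact l.Prime] (n : ℕ) : Function.Injective (mz l n) := by
  intro A B h
  ext i j
  have := congrFun (congrFun h i) j
  exact Subtype.ext this

lemma mz_det (l : ℕ) [Fact l.Prime] (n : ℕ) (A : Matrix (Fin n) (Fin n) ℤ_[l]) :
    (mz l n A).det = (A.det : ℚ_[l]) :=
  ((PadicInt.Coe.ringHom : ℤ_[l] →+* ℚ_[l]).map_det A).symm

lemma int_iff (l : ℕ) [Fact l.Prime] (n : ℕ) (A : Matrix (Fin n) (Fin n) ℚ_[l]) :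
    (∀ i j, ‖A i j‖ ≤ 1) ↔ ∃ B, mz l n B = A := by
  constructor
  · intro h
    exact ⟨Matrix.of fun i j => ⟨A i j, h i j⟩, by ext i j; rfl⟩
  · rintro ⟨B, rfl⟩ i j
    exact (B i j).2

lemma int_mul (l : ℕ) [Fact l.Prime] (n : ℕ) (A B : Matrix (Fin n) (Fin n) ℚ_[l])
    (hA : ∀ i j, ‖A i j‖ ≤ 1) (hB : ∀ i j, ‖B i j‖ ≤ 1) : ∀ i j, ‖(A * B) i j‖ ≤ 1 := by
  rw [int_iff] at *
  obtain ⟨A, rfl⟩ := hA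
  obtain ⟨B, rfl⟩ := hB
  exact ⟨A * B, map_mul _ _ _⟩

lemma int_unit (l : ℕ) [Fact l.Prime] (n : ℕ) (A : Matrix (Fin n) (Fin n) ℚ_[l])
    (hA : ∀ i j, ‖A i j‖ ≤ 1) (hd : ‖A.det‖ = 1) : ∃ u : GL (Fin n) ℤ_[l], mz l n u.1 = A := by
  rw [int_iff] at hA
  obtain ⟨B, rfl⟩ := hA
  rw [mz_det] at hd
  have : IsUnit B := (Matrix.isUnit_iff_isUnit_det B).2 (PadicInt.isUnit_iff.2 hd)
  exact ⟨this.unit, rfl⟩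

lemma int_inv (l : ℕ) [Fact l.Prime] (n : ℕ) (A B : Matrix (Fin n) (Fin n) ℚ_[l])
    (hA : ∀ i j, ‖A i j‖ ≤ 1) (hd : ‖A.det‖ = 1) (h : A * B = 1) : ∀ i j, ‖B i j‖ ≤ 1 := by
  obtain ⟨u, rfl⟩ := int_unit l n A hA hd
  rw [int_iff]
  refine ⟨(u⁻¹).1, ?_⟩
  have h2 : mz l n (u⁻¹).1 * mz l n u.1 = 1 := by
    rw [← map_mul, Units.inv_mul, map_one]
  calc mz l n (u⁻¹).1 = mz l n (u⁻¹).1 * (mz l n u.1 * B) := by rw [h, mul_one]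
    _ = B := by rw [← mul_assoc, h2, one_mul]

/-- the inclusion `H(ℤ_l) → H(ℚ_l)` -/
def eD (l : ℕ) [Fact l.Prime] : DD ℤ_[l] →* MH l where
  toFun x := (mz l 2 x.1.1.1, mz l 2 x.1.2.1)
  map_one' := by simp
  map_mul' x y := by simp

lemma eD_inj (l : ℕ) [Fact l.Prime] : Function.Injective (eD l) := by
  intro x y h
  have h1 := mz_inj l 2 (congrArg Prod.fst h)
  have h2 := mz_inj l 2 (congrArg Prod.snd h)
  exact Subtype.ext (Prod.ext (Units.ext h1) (Units.ext h2))

lemma eD_range (l : ℕ) [Fact l.Prime] : Set.range (eD l) = HZ l := by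
  ext y
  constructor
  · rintro ⟨x, rfl⟩
    have hx : x.1.1.1.det = x.1.2.1.det := congrArg Units.val ((mem_DD _).1 x.2)
    refine ⟨(int_iff _ _ _).2 ⟨_, rfl⟩, (int_iff _ _ _).2 ⟨_, rfl⟩, ?_, ?_⟩
    · change ‖(mz l 2 x.1.1.1).det‖ = 1
      rw [mz_det]
      exact PadicInt.isUnit_iff.1 ((Matrix.isUnit_iff_isUnit_det _).1 x.1.1.isUnit)
    · change (mz l 2 x.1.1.1).det = (mz l 2 x.1.2.1).det
      rw [mz_det, mz_det, hx]
  · rintro ⟨h1, h2, h3, h4⟩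
    obtain ⟨u, hu⟩ := int_unit l 2 _ h1 h3
    obtain ⟨v, hv⟩ := int_unit l 2 _ h2 (h4 ▸ h3)
    refine ⟨⟨(u, v), ?_⟩, Prod.ext hu hv⟩
    rw [mem_DD]
    refine Units.ext (Subtype.ext ?_)
    change ((u.1.det : ℤ_[l]) : ℚ_[l]) = (v.1.det : ℤ_[l])
    rw [← mz_det, ← mz_det, hu, hv, h4]

/-- subgroup of `DD` attached to a subgroup set -/
def SV (l : ℕ) [Fact l.Prime] (V : Set (MH l)) (hV : IsSubgroupSet l V) :
    Subgroup (DD ℤ_[l]) where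
  carrier := {x | eD l x ∈ V}
  one_mem' := by simpa using hV.1
  mul_mem' {x y} hx hy := by
    simp only [Set.mem_ofPred_eq, map_mul] at *
    exact hV.2.1 _ hx _ hy
  inv_mem' {x} hx := by
    obtain ⟨y, hy, h1, h2⟩ := hV.2.2 _ hx
    have h3 : eD l x⁻¹ * eD l x = 1 := by rw [← map_mul, inv_mul_cancel, map_one]
    have : eD l x⁻¹ = y := by
      calc eD l x⁻¹ = eD l x⁻¹ * (eD l x * y) := by rw [h1, mul_one]
        _ = y := by rw [← mul_assoc, h3, one_mul]
    change eD l x⁻¹ ∈ V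
    rwa [this]

lemma coset_iff (l : ℕ) [Fact l.Prime] (V : Set (MH l)) (hV : IsSubgroupSet l V)
    (x y : DD ℤ_[l]) :
    ({eD l x} : Set (MH l)) * V = {eD l y} * V ↔ x⁻¹ * y ∈ SV l V hV := by
  have key : ∀ a b : DD ℤ_[l], a⁻¹ * b ∈ SV l V hV →
      ({eD l b} : Set (MH l)) * V ⊆ {eD l a} * V := by
    intro a b h
    rw [Set.singleton_mul, Set.singleton_mul]
    rintro _ ⟨v, hv, rfl⟩
    refine ⟨eD l (a⁻¹ * b) * v, hV.2.1 _ h _ hv, ?_⟩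
    change eD l a * (eD l (a⁻¹ * b) * v) = eD l b * v
    rw [← mul_assoc, ← map_mul, mul_inv_cancel_left]
  constructor
  · intro h
    have : eD l y ∈ ({eD l x} : Set (MH l)) * V := by
      rw [h, Set.singleton_mul]; exact ⟨1, hV.1, mul_one _⟩
    rw [Set.singleton_mul] at this
    obtain ⟨v, hv, hv'⟩ := this
    change eD l (x⁻¹ * y) ∈ V
    have : eD l (x⁻¹ * y) = v := by
      rw [map_mul, ← hv', ← mul_assoc, ← map_mul, inv_mul_cancel, map_one, one_mul]
    rwa [this]
  · intro h
    refine (key y x ?_).antisymm (key x y h)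
    simpa using inv_mem h

lemma image_eq_range (l : ℕ) [Fact l.Prime] (V : Set (MH l)) (hV : IsSubgroupSet l V) :
    ∃ F : DD ℤ_[l] ⧸ SV l V hV → Set (MH l), Function.Injective F ∧
      Set.range F = (fun g => ({g} : Set (MH l)) * V) '' HZ l := by
  refine ⟨Quotient.lift (fun x => ({eD l x} : Set (MH l)) * V) ?_, ?_, ?_⟩
  · intro a b h
    exact (coset_iff l V hV a b).2 (QuotientGroup.leftRel_apply.1 h)
  · intro a b
    induction a using Quotient.inductionOn
    induction b using Quotient.inductionOn
    intro h
    exact QuotientGroup.eq.2 ((coset_iff l V hV _ _).1 h)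
  · rw [← eD_range, ← Set.range_comp]
    ext s
    constructor
    · rintro ⟨a, rfl⟩
      induction a using Quotient.inductionOn with | _ a => exact ⟨a, rfl⟩
    · rintro ⟨a, rfl⟩
      exact ⟨QuotientGroup.mk a, rfl⟩

lemma Hindex_eq (l : ℕ) [Fact l.Prime] (V : Set (MH l)) (hV : IsSubgroupSet l V) :
    Hindex l V = (SV l V hV).index := by
  obtain ⟨F, hF, h⟩ := image_eq_range l V hV
  unfold Hindex
  rw [← h, ← Nat.card_coe_set_eq, Nat.card_range_of_injective hF]
  rfl

lemma image_finite (l : ℕ) [Fact l.Prime] (V : Set (MH l)) (hV : IsSubgroupSet l V)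
    (h0 : (SV l V hV).index ≠ 0) : ((fun g => ({g} : Set (MH l)) * V) '' HZ l).Finite := by
  obtain ⟨F, hF, h⟩ := image_eq_range l V hV
  rw [← h]
  have : Finite (DD ℤ_[l] ⧸ SV l V hV) := Nat.finite_of_card_ne_zero h0
  exact Set.finite_range F

lemma tendsto_one (l : ℕ) [Fact l.Prime] (x : ℕ → ℤ_[l]) (c : ℕ)
    (hx : ∀ n, PadicInt.toZModPow n (x n) = (c : ZMod (l ^ n))) :
    Filter.Tendsto (fun n => ((x n : ℤ_[l]) : ℚ_[l])) Filter.atTop (nhds (c : ℚ_[l])) := by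
  rw [tendsto_iff_norm_sub_tendsto_zero]
  have hl : 1 < (l : ℝ) := by exact_mod_cast (Fact.out : l.Prime).one_lt
  refine squeeze_zero (g := fun n : ℕ => ((l : ℝ)⁻¹) ^ n) (fun _ => norm_nonneg _) ?_
    (tendsto_pow_atTop_nhds_zero_of_lt_one (by positivity) (inv_lt_one_of_one_lt₀ hl))
  intro n
  have : x n - c ∈ RingHom.ker (PadicInt.toZModPow n : ℤ_[l] →+* ZMod (l ^ n)) := by
    rw [RingHom.mem_ker, map_sub, hx, map_natCast, sub_self]
  rw [PadicInt.ker_toZModPow, ← PadicInt.norm_le_pow_iff_mem_span_pow] at this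
  have h2 : ‖((x n : ℤ_[l]) : ℚ_[l]) - c‖ = ‖x n - (c : ℤ_[l])‖ := by
    rw [PadicInt.norm_def]; simp
  rw [h2]
  simpa using this

lemma open_ker (l : ℕ) [Fact l.Prime] (V : Set (MH l)) (hV : IsSubgroupSet l V)
    (hO : ∃ O : Set (MH l), IsOpen O ∧ V = O ∩ HZ l) :
    ∃ n, (DM (PadicInt.toZModPow n : ℤ_[l] →+* ZMod (l ^ n))).ker ≤ SV l V hV := by
  obtain ⟨O, hO, hVO⟩ := hO
  by_contra! hc
  simp only [SetLike.not_le_iff_exists] at hc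
  choose x hx hxV using hc
  have h1O : (1 : MH l) ∈ O := (hVO ▸ hV.1).1
  have aux : ∀ (n : ℕ) (R : Type) [CommRing R] (i j : Fin 2),
      (1 : Matrix (Fin 2) (Fin 2) R) i j = ((if i = j then 1 else 0 : ℕ) : R) := by
    intro n R _ i j
    rw [Matrix.one_apply]; split_ifs <;> simp
  have ht : Filter.Tendsto (fun n => eD l (x n)) Filter.atTop (nhds (1 : MH l)) := by
    rw [Prod.one_eq_mk, nhds_prod_eq]
    refine Filter.Tendsto.prodMk ?_ ?_
    · refine tendsto_pi_nhds.2 fun i => tendsto_pi_nhds.2 fun j => ?_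
      rw [aux 0]
      refine tendsto_one l (fun n => (x n).1.1.1 i j) _ fun n => ?_
      rw [← aux 0]
      exact ((mem_DM_ker _ _).1 (hx n)).1 i j
    · refine tendsto_pi_nhds.2 fun i => tendsto_pi_nhds.2 fun j => ?_
      rw [aux 0]
      refine tendsto_one l (fun n => (x n).1.2.1 i j) _ fun n => ?_
      rw [← aux 0]
      exact ((mem_DM_ker _ _).1 (hx n)).2 i j
  obtain ⟨n, hn⟩ := (ht.eventually (hO.mem_nhds h1O)).exists
  refine hxV n ?_
  change eD l (x n) ∈ V
  rw [hVO]
  exact ⟨hn, eD_range l ▸ ⟨x n, rfl⟩⟩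

lemma iota_mul (l : ℕ) [Fact l.Prime] (x y : MH l) : iota l (x * y) = iota l x * iota l y := by
  refine Prod.ext ?_ rfl
  ext i j
  fin_cases i <;> fin_cases j <;>
    simp [iota, Matrix.mul_apply, Fin.sum_univ_succ]

lemma iota_scal (l : ℕ) [Fact l.Prime] (a : ℚ_[l]) : iota l (a • 1) = a • 1 := by
  refine Prod.ext ?_ rfl
  ext i j
  fin_cases i <;> fin_cases j <;> simp [iota]

lemma iota_one (l : ℕ) [Fact l.Prime] : iota l 1 = 1 := by
  simpa using iota_scal l 1

lemma iota_J (l : ℕ) [Fact l.Prime] (x : MH l) (hx : x.1.det = x.2.det) :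
    (iota l x).1.transpose * Jmat l * (iota l x).1 = x.2.det • Jmat l := by
  rw [Matrix.det_fin_two, Matrix.det_fin_two] at hx
  rw [Matrix.det_fin_two]
  ext i j
  fin_cases i <;> fin_cases j <;>
    simp [iota, Jmat, Matrix.mul_apply, Fin.sum_univ_succ] <;>
    first
    | ring1
    | linear_combination hx
    | linear_combination -hx

lemma iota_det (l : ℕ) [Fact l.Prime] (x : MH l) :
    (iota l x).1.det = x.1.det * x.2.det := by
  rw [Matrix.det_fin_two, Matrix.det_fin_two]
  simp [iota, Matrix.det_succ_row_zero, Fin.sum_univ_succ, Fin.succAbove]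
  ring

lemma iota_cont (l : ℕ) [Fact l.Prime] : Continuous (iota l) := by
  unfold iota
  refine Continuous.prodMk ?_ continuous_snd
  refine continuous_pi fun i => continuous_pi fun j => ?_
  fin_cases i <;> fin_cases j <;> simp <;> fun_prop

lemma GZ_mul (l : ℕ) [Fact l.Prime] (x y : MG l) (hx : x ∈ GZ l) (hy : y ∈ GZ l) :
    x * y ∈ GZ l := by
  obtain ⟨a1, a2, a3, a4, a5⟩ := hx
  obtain ⟨b1, b2, b3, b4, b5⟩ := hy
  refine ⟨int_mul _ _ _ _ a1 b1, int_mul _ _ _ _ a2 b2, ?_, ?_, ?_⟩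
  · rw [Prod.fst_mul, Matrix.det_mul, norm_mul, a3, b3, one_mul]
  · rw [Prod.snd_mul, Matrix.det_mul, norm_mul, a4, b4, one_mul]
  · rw [Prod.snd_mul, Matrix.det_mul, Prod.fst_mul, Matrix.transpose_mul]
    calc y.1.transpose * x.1.transpose * Jmat l * (x.1 * y.1)
        = y.1.transpose * (x.1.transpose * Jmat l * x.1) * y.1 := by simp only [mul_assoc]
      _ = _ := by rw [a5, Matrix.mul_smul, Matrix.smul_mul, b5, smul_smul]

lemma J_inv (l : ℕ) [Fact l.Prime] (x y : Matrix (Fin 4) (Fin 4) ℚ_[l]) (d : ℚ_[l]) (hd : d ≠ 0)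
    (h : x.transpose * Jmat l * x = d • Jmat l) (hxy : x * y = 1) :
    y.transpose * Jmat l * y = d⁻¹ • Jmat l := by
  have h1 : y.transpose * (x.transpose * Jmat l * x) * y = Jmat l := by
    calc y.transpose * (x.transpose * Jmat l * x) * y
        = (y.transpose * x.transpose) * Jmat l * (x * y) := by simp only [mul_assoc]
      _ = Jmat l := by rw [← Matrix.transpose_mul, hxy]; simp
  rw [h, Matrix.mul_smul, Matrix.smul_mul] at h1
  rw [eq_inv_smul_iff₀ hd, h1]

lemma GZ_inv (l : ℕ) [Fact l.Prime] (x y : MG l) (hx : x ∈ GZ l) (hxy : x * y = 1) :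
    y ∈ GZ l := by
  obtain ⟨a1, a2, a3, a4, a5⟩ := hx
  have h1 : x.1 * y.1 = 1 := congrArg Prod.fst hxy
  have h2 : x.2 * y.2 = 1 := congrArg Prod.snd hxy
  have d1 : x.1.det * y.1.det = 1 := by rw [← Matrix.det_mul, h1, Matrix.det_one]
  have d2 : x.2.det * y.2.det = 1 := by rw [← Matrix.det_mul, h2, Matrix.det_one]
  refine ⟨int_inv _ _ _ _ a1 a3 h1, int_inv _ _ _ _ a2 a4 h2, ?_, ?_, ?_⟩
  · have := congrArg norm d1
    rwa [norm_mul, a3, one_mul, norm_one] at this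
  · have := congrArg norm d2
    rwa [norm_mul, a4, one_mul, norm_one] at this
  · rw [J_inv l _ _ _ (left_ne_zero_of_mul_eq_one d2) a5 h1, eq_inv_of_mul_eq_one_right d2]

lemma mem_conj (l : ℕ) [Fact l.Prime] (g gi : MG l) (h1 : g * gi = 1) (h2 : gi * g = 1)
    (y : MG l) : y ∈ ({g} : Set (MG l)) * GZ l * {gi} ↔ gi * y * g ∈ GZ l := by
  rw [Set.mul_singleton, Set.singleton_mul]
  constructor
  · rintro ⟨_, ⟨x, hx, rfl⟩, rfl⟩
    have : gi * (g * x * gi) * g = x := by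
      calc gi * (g * x * gi) * g = (gi * g) * x * (gi * g) := by simp only [mul_assoc]
        _ = x := by rw [h2, one_mul, mul_one]
    exact this.symm ▸ hx
  · intro h
    refine ⟨_, ⟨_, h, rfl⟩, ?_⟩
    change g * (gi * y * g) * gi = y
    calc g * (gi * y * g) * gi = (g * gi) * y * (g * gi) := by simp only [mul_assoc]
      _ = y := by rw [h1, one_mul, mul_one]

lemma conj_int (l : ℕ) [Fact l.Prime] (g gi : MG l) (hg : g ∈ GQ l) (h1 : g * gi = 1)
    (h : MH l) (hh : h ∈ HZ l) :
    gi * iota l h * g ∈ GZ l ↔ (∀ i j, ‖(gi * iota l h * g).1 i j‖ ≤ 1) ∧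
      (∀ i j, ‖(gi * iota l h * g).2 i j‖ ≤ 1) := by
  refine ⟨fun h => ⟨h.1, h.2.1⟩, fun hi => ⟨hi.1, hi.2, ?_⟩⟩
  obtain ⟨-, -, hn, hd⟩ := hh
  obtain ⟨μ, hμ, gJ, gμ⟩ := hg
  have e1 : g.1 * gi.1 = 1 := congrArg Prod.fst h1
  have e2 : g.2 * gi.2 = 1 := congrArg Prod.snd h1
  have d1 : g.1.det * gi.1.det = 1 := by rw [← Matrix.det_mul, e1, Matrix.det_one]
  have d2 : g.2.det * gi.2.det = 1 := by rw [← Matrix.det_mul, e2, Matrix.det_one]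
  have D1 : (gi * iota l h * g).1.det = h.1.det * h.2.det := by
    rw [Prod.fst_mul, Prod.fst_mul, Matrix.det_mul, Matrix.det_mul, iota_det]
    linear_combination (h.1.det * h.2.det) * d1
  have D2 : (gi * iota l h * g).2.det = h.2.det := by
    rw [Prod.snd_mul, Prod.snd_mul, Matrix.det_mul, Matrix.det_mul]
    change gi.2.det * h.2.det * g.2.det = _
    linear_combination (h.2.det) * d2
  refine ⟨?_, ?_, ?_⟩
  · rw [D1, norm_mul, ← hd, hn, one_mul]
  · rw [D2, ← hd, hn]
  · rw [D2]
    have giJ := J_inv l _ _ _ hμ gJ e1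
    have hJ := iota_J l h hd
    rw [Prod.fst_mul, Prod.fst_mul, Matrix.transpose_mul, Matrix.transpose_mul]
    calc g.1.transpose * ((iota l h).1.transpose * gi.1.transpose) * Jmat l *
          (gi.1 * (iota l h).1 * g.1)
        = g.1.transpose * ((iota l h).1.transpose * (gi.1.transpose * Jmat l * gi.1) *
          (iota l h).1) * g.1 := by simp only [mul_assoc]
      _ = _ := by
        rw [giJ, Matrix.mul_smul, Matrix.smul_mul, hJ, smul_smul, Matrix.mul_smul,
          Matrix.smul_mul, gJ, smul_smul]
        congr 1
        field_simp

/-- the group `W` -/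
def WW (l : ℕ) [Fact l.Prime] (g gi : MG l) : Set (MH l) :=
  {h ∈ HZ l | iota l h ∈ ({g} : Set (MG l)) * GZ l * {gi}}

lemma WW_sub (l : ℕ) [Fact l.Prime] (g gi : MG l) (h1 : g * gi = 1) (h2 : gi * g = 1) :
    IsSubgroupSet l (WW l g gi) := by
  have hm : ∀ h, h ∈ WW l g gi ↔ h ∈ HZ l ∧ gi * iota l h * g ∈ GZ l := fun h => by
    rw [← mem_conj l g gi h1 h2]; rfl
  have hmul : ∀ x y : MG l, (gi * x * g) * (gi * y * g) = gi * (x * y) * g := fun x y => by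
    calc (gi * x * g) * (gi * y * g) = gi * x * (g * gi) * y * g := by simp only [mul_assoc]
      _ = _ := by rw [h1, mul_one]; simp only [mul_assoc]
  refine ⟨?_, ?_, ?_⟩
  · rw [hm, iota_one, mul_one, h2, ← eD_range]
    refine ⟨⟨1, map_one _⟩, ?_, ?_, ?_, ?_, ?_⟩
    · exact (int_iff _ _ _).2 ⟨1, map_one _⟩
    · exact (int_iff _ _ _).2 ⟨1, map_one _⟩
    · simp
    · simp
    · simp
  · intro x hx y hy
    rw [hm] at *
    refine ⟨?_, ?_⟩
    · have hx1 := hx.1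
      have hy1 := hy.1
      rw [← eD_range] at *
      obtain ⟨a, rfl⟩ := hx1
      obtain ⟨b, rfl⟩ := hy1
      exact ⟨a * b, map_mul _ _ _⟩
    · rw [iota_mul, ← hmul]
      exact GZ_mul _ _ _ hx.2 hy.2
  · intro x hx
    rw [hm] at hx
    obtain ⟨hx1, hx2⟩ := hx
    rw [← eD_range] at hx1
    obtain ⟨a, rfl⟩ := hx1
    have i1 : eD l a * eD l a⁻¹ = 1 := by rw [← map_mul, mul_inv_cancel, map_one]
    have i2 : eD l a⁻¹ * eD l a = 1 := by rw [← map_mul, inv_mul_cancel, map_one]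
    refine ⟨eD l a⁻¹, ?_, i1, i2⟩
    rw [hm]
    refine ⟨eD_range l ▸ ⟨_, rfl⟩, GZ_inv l _ _ hx2 ?_⟩
    rw [hmul, ← iota_mul, i1, iota_one, mul_one, h2]

lemma WW_open (l : ℕ) [Fact l.Prime] (g gi : MG l) (hg : g ∈ GQ l) (h1 : g * gi = 1)
    (h2 : gi * g = 1) : ∃ O : Set (MH l), IsOpen O ∧ WW l g gi = O ∩ HZ l := by
  have hball : IsOpen {x : ℚ_[l] | ‖x‖ ≤ 1} := by
    have := IsUltrametricDist.isOpen_closedBall (0 : ℚ_[l]) (one_ne_zero (α := ℝ))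
    convert this using 1
    ext x; simp
  have hc : Continuous fun h : MH l => gi * iota l h * g :=
    (continuous_const.mul (iota_cont l)).mul continuous_const
  refine ⟨(⋂ i, ⋂ j, (fun h : MH l => (gi * iota l h * g).1 i j) ⁻¹' {x | ‖x‖ ≤ 1}) ∩
    (⋂ i, ⋂ j, (fun h : MH l => (gi * iota l h * g).2 i j) ⁻¹' {x | ‖x‖ ≤ 1}), ?_, ?_⟩
  · refine IsOpen.inter ?_ ?_
    · refine isOpen_iInter_of_finite fun i => isOpen_iInter_of_finite fun j => hball.preimage ?_
      exact (continuous_apply_apply i j).comp (continuous_fst.comp hc)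
    · refine isOpen_iInter_of_finite fun i => isOpen_iInter_of_finite fun j => hball.preimage ?_
      exact (continuous_apply_apply i j).comp (continuous_snd.comp hc)
  · ext h
    by_cases hh : h ∈ HZ l
    · have : h ∈ WW l g gi ↔ gi * iota l h * g ∈ GZ l := by
        rw [← mem_conj l g gi h1 h2]
        exact ⟨fun h => h.2, fun h => ⟨hh, h⟩⟩
      rw [this, conj_int l g gi hg h1 h hh]
      simp [hh]
    · exact ⟨fun h => absurd h.1 hh, fun h => absurd h.2 hh⟩

lemma WW_scal (l : ℕ) [Fact l.Prime] (g gi : MG l) (hg : g ∈ GQ l) (h1 : g * gi = 1)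
    (h2 : gi * g = 1) (u : ℤ_[l]ˣ) :
    (⟨scal _ u, scal_mem _ u⟩ : DD ℤ_[l]) ∈ SV l (WW l g gi) (WW_sub l g gi h1 h2) := by
  change eD l _ ∈ WW l g gi
  have hH : eD l ⟨scal _ u, scal_mem _ u⟩ ∈ HZ l := eD_range l ▸ ⟨_, rfl⟩
  refine ⟨hH, ?_⟩
  rw [mem_conj l g gi h1 h2, conj_int l g gi hg h1 _ hH]
  have hs : eD l ⟨scal _ u, scal_mem _ u⟩ = ((u : ℤ_[l]) : ℚ_[l]) • 1 := by
    refine Prod.ext ?_ ?_ <;> ext i j <;>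
    · change ((Matrix.diagonal (fun _ => (u : ℤ_[l])) i j : ℤ_[l]) : ℚ_[l]) =
        ((u : ℤ_[l]) : ℚ_[l]) • (1 : Matrix (Fin 2) (Fin 2) ℚ_[l]) i j
      rw [Matrix.diagonal_apply, Matrix.one_apply]
      split_ifs <;> simp
  have hs2 : gi * iota l (eD l ⟨scal _ u, scal_mem _ u⟩) * g = ((u : ℤ_[l]) : ℚ_[l]) • 1 := by
    rw [hs, iota_scal, mul_smul_comm, smul_mul_assoc, mul_one, h2]
  rw [hs2]
  have hu : ‖((u : ℤ_[l]) : ℚ_[l])‖ ≤ 1 := (u : ℤ_[l]).2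
  constructor <;> intro i j
  · change ‖((u : ℤ_[l]) : ℚ_[l]) • (1 : Matrix (Fin 4) (Fin 4) ℚ_[l]) i j‖ ≤ 1
    rw [Matrix.one_apply]
    split_ifs <;> simp [hu]
  · change ‖((u : ℤ_[l]) : ℚ_[l]) • (1 : Matrix (Fin 2) (Fin 2) ℚ_[l]) i j‖ ≤ 1
    rw [Matrix.one_apply]
    split_ifs <;> simp [hu]

/-- (i) For every open subgroup `V` of finite index in `H(ℤ_ℓ)`, one has
`v_p([H(ℤ_ℓ) : V]) ≤ v_p((ℓ−1)³(ℓ+1)²)` for any prime `p ≠ ℓ`.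
(ii) For `g ∈ G(ℚ_ℓ)`, the subgroup `W = {h ∈ H(ℤ_ℓ) : ι(h) ∈ g·G(ℤ_ℓ)·g⁻¹}` is an open
subgroup of finite index in `H(ℤ_ℓ)`, with `v_p([H(ℤ_ℓ) : W]) ≤ v_p((ℓ−1)²(ℓ+1)²)`. -/
theorem stmt18 (l p : ℕ) [Fact l.Prime] [Fact p.Prime] (hlp : l ≠ p) :
    (∀ V : Set (MH l), V ⊆ HZ l → IsSubgroupSet l V →
      (∃ O : Set (MH l), IsOpen O ∧ V = O ∩ HZ l) →
      ((fun g => ({g} : Set (MH l)) * V) '' HZ l).Finite →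
      padicValNat p (Hindex l V) ≤ padicValNat p ((l - 1) ^ 3 * (l + 1) ^ 2)) ∧
    (∀ g gi : MG l, g ∈ GQ l → g * gi = 1 → gi * g = 1 →
      IsSubgroupSet l {h ∈ HZ l | iota l h ∈ ({g} : Set (MG l)) * GZ l * {gi}} ∧
      (∃ O : Set (MH l), IsOpen O ∧
        {h ∈ HZ l | iota l h ∈ ({g} : Set (MG l)) * GZ l * {gi}} = O ∩ HZ l) ∧
      ((fun x => ({x} : Set (MH l)) *
          {h ∈ HZ l | iota l h ∈ ({g} : Set (MG l)) * GZ l * {gi}}) '' HZ l).Finite ∧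
      padicValNat p (Hindex l {h ∈ HZ l | iota l h ∈ ({g} : Set (MG l)) * GZ l * {gi}}) ≤
        padicValNat p ((l - 1) ^ 2 * (l + 1) ^ 2)) := by
  have hl1 : 0 < l - 1 := by have := (Fact.out : l.Prime).two_le; omega
  constructor
  · intro V _ hV hO _
    obtain ⟨n, hn⟩ := open_ker l V hV hO
    obtain ⟨-, N, hN⟩ := core l _ n hn
    rw [Hindex_eq l V hV]
    exact val_le l p hlp _ N _ (by positivity) ((dvd_mul_right _ _).trans hN)
  · intro g gi hg h1 h2
    change IsSubgroupSet l (WW l g gi) ∧ (∃ O : Set (MH l), IsOpen O ∧ WW l g gi = O ∩ HZ l) ∧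
      ((fun x => ({x} : Set (MH l)) * WW l g gi) '' HZ l).Finite ∧
      padicValNat p (Hindex l (WW l g gi)) ≤ _
    have hV := WW_sub l g gi h1 h2
    have hO := WW_open l g gi hg h1 h2
    obtain ⟨n, hn⟩ := open_ker l _ hV hO
    obtain ⟨h0, N, hN⟩ := core l _ n hn
    refine ⟨hV, hO, image_finite l _ hV h0, ?_⟩
    rw [Hindex_eq l _ hV]
    refine val_le l p hlp _ N _ (by positivity) ?_
    have hd := (mul_dvd_mul_left _ (card_scal l _ (WW_scal l g gi hg h1 h2))).trans hN
    refine Nat.dvd_of_mul_dvd_mul_right hl1 (hd.trans (dvd_of_eq ?_))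
    ring
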